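/- An ε-optimal representation in the linear class captures the top singular directions of the projected augmentation matrix: let f ∈ F_φ have normalized matrix F_n ∈ ℝ^{X×d}, and let ε = L_spec(f) − inf_{f*∈F_φ} L_spec(f*). Then for every d′ ≤ d with γ_{d′} > γ_{d+1}, ‖P⊥_{F_n} U_{:d′}‖_F² ≤ ε·d′ / (γ_{d′} − γ_{d+1})², where P⊥_{F_n} is the orthogonal projection onto the orthogonal complement of the column space of F_n. -/

import Mathlib

open Matrix Finset

variable {Xb X : Type*} [Fintype Xb] [Fintype X] [DecidableEq Xb] [DecidableEq X]

/-- Marginal probability `w(x) = ∑_{x̄} w(x̄)·w(x|x̄)` of an augmentation. -/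
noncomputable def wX (wb : Xb → ℝ) (wc : Xb → X → ℝ) (x : X) : ℝ := ∑ xb, wb xb * wc xb x

/-- Input–augmentation joint matrix `Ā[x̄,x] = w(x̄,x)`. -/
noncomputable def Abar (wb : Xb → ℝ) (wc : Xb → X → ℝ) : Matrix Xb X ℝ :=
  Matrix.of fun xb x => wb xb * wc xb x

/-- Normalized input–augmentation matrix `Ā_n = D̄^{-1/2} Ā D^{-1/2}`. -/
noncomputable def AbarN (wb : Xb → ℝ) (wc : Xb → X → ℝ) : Matrix Xb X ℝ :=
  (Matrix.diagonal fun xb => (Real.sqrt (wb xb))⁻¹) * Abar wb wc *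
    (Matrix.diagonal fun x => (Real.sqrt (wX wb wc x))⁻¹)

/-- Similarity matrix `A[x,x'] = w(x,x')`. -/
noncomputable def Amat (wb : Xb → ℝ) (wc : Xb → X → ℝ) : Matrix X X ℝ :=
  Matrix.of fun x x' => ∑ xb, wb xb * wc xb x * wc xb x'

/-- Normalized similarity matrix `A_n = D^{-1/2} A D^{-1/2}`. -/
noncomputable def AN (wb : Xb → ℝ) (wc : Xb → X → ℝ) : Matrix X X ℝ :=
  (Matrix.diagonal fun x => (Real.sqrt (wX wb wc x))⁻¹) * Amat wb wc *
    (Matrix.diagonal fun x => (Real.sqrt (wX wb wc x))⁻¹)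

/-- Normalized matrix of a map `f` w.r.t. weights `w`: rows `√(w x) · f x`. -/
noncomputable def Nmat {ι : Type*} (w : X → ℝ) (f : X → ι → ℝ) : Matrix X ι ℝ :=
  Matrix.of fun x i => Real.sqrt (w x) * f x i

/-- `P` is the orthogonal projection onto the column space of `B`. -/
def IsProjOnto {n m : Type*} [Fintype n] [Fintype m]
    (P : Matrix n n ℝ) (B : Matrix n m ℝ) : Prop :=
  P.IsSymm ∧ P * P = P ∧ LinearMap.range P.mulVecLin = LinearMap.range B.mulVecLin

/-- Squared Frobenius norm. -/
noncomputable def frobSq {n m : Type*} [Fintype n] [Fintype m] (M : Matrix n m ℝ) : ℝ :=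
  ∑ i, ∑ j, M i j ^ 2

/-- Spectral contrastive loss. -/
noncomputable def Lspec {d : ℕ} (wb : Xb → ℝ) (wc : Xb → X → ℝ) (f : X → Fin d → ℝ) : ℝ :=
  -2 * ∑ x, ∑ x', (∑ xb, wb xb * wc xb x * wc xb x') * (∑ i, f x i * f x' i)
    + ∑ x, ∑ x', wX wb wc x * wX wb wc x' * (∑ i, f x i * f x' i) ^ 2

/-- Augmentation-averaged representation `f̄(x̄) = ∑_x w(x|x̄) f(x)`. -/
noncomputable def fbar {ι : Type*} (wc : Xb → X → ℝ) (f : X → ι → ℝ) (xb : Xb) (i : ι) : ℝ :=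
  ∑ x, wc xb x * f x i

/-- Downstream classification loss. -/
noncomputable def Lclf {d : ℕ} (wb : Xb → ℝ) (wc : Xb → X → ℝ) (f : X → Fin d → ℝ)
    (ystar : Xb → ℝ) : ℝ :=
  ⨅ v : Fin d → ℝ,
    ∑ xb, wb xb * (if ystar xb * (∑ i, v i * fbar wc f xb i) < 0 then (1 : ℝ) else 0)

/-- Regression loss of features `φ` on a target `g` over augmentations. -/
noncomputable def LregPhi {ι : Type*} [Fintype ι] (w : X → ℝ) (φ : X → ι → ℝ) (g : X → ℝ) : ℝ :=
  ⨅ v : ι → ℝ, ∑ x, w x * ((∑ i, v i * φ x i) - g x) ^ 2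

/-- Inconsistency `Δ(g, y*)`. -/
noncomputable def Delta (wb : Xb → ℝ) (wc : Xb → X → ℝ) (g : X → ℝ) (ystar : Xb → ℝ) : ℝ :=
  ∑ xb, wb xb * ∑ x, wc xb x * (if g x ≠ ystar xb then (1 : ℝ) else 0)

/-- Feature covariance `Σ(φ) = ∑_x w(x)·φ(x)φ(x)ᵀ`. -/
noncomputable def SigmaPhi {ι : Type*} [Fintype ι] (w : X → ℝ) (φ : X → ι → ℝ) :
    Matrix ι ι ℝ :=
  Matrix.of fun i j => ∑ x, w x * φ x i * φ x j

/-- Averaged-feature covariance `Σ(φ̄) = ∑_{x̄} w(x̄)·φ̄(x̄)φ̄(x̄)ᵀ`. -/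
noncomputable def SigmaBar {ι : Type*} [Fintype ι] (wb : Xb → ℝ) (wc : Xb → X → ℝ)
    (φ : X → ι → ℝ) : Matrix ι ι ℝ :=
  Matrix.of fun i j => ∑ xb, wb xb * fbar wc φ xb i * fbar wc φ xb j

/-!
For a map with normalized matrix `F`, the spectral contrastive loss is `‖A_n - F Fᵀ‖² - ‖A_n‖²` in
Frobenius norms. For `F` in the range of `P` only the compression `P A_n P = U Γ Uᵀ` matters. If `Q`
projects onto the columns of `F`, then expanding `0 ≤ ‖U Γ Uᵀ Q - F Fᵀ‖²` bounds the loss below by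
`-∑ γ_i² c_i` with overlaps `c_i = ‖Q u_i‖²`, whereas truncating `U √Γ` to `d` columns shows that
the infimum is at most `-∑_{i ≤ d} γ_i²`. The overlaps lie in `[0, 1]` and sum to at most
`tr Q ≤ d`, so each unit of overlap missing from `u_1, …, u_{d'}` costs at least
`γ_{d'}² - γ_{d+1}² ≥ (γ_{d'} - γ_{d+1})²`. This gives the bound without the factor `d'`.
-/

section Frobenius

variable {n m k : Type*} [Fintype n] [Fintype m] [Fintype k]

lemma frobSq_nonneg (M : Matrix n m ℝ) : 0 ≤ frobSq M :=
  sum_nonneg fun _ _ => sum_nonneg fun _ _ => sq_nonneg _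

lemma frobSq_transpose (M : Matrix n m ℝ) : frobSq Mᵀ = frobSq M :=
  sum_comm

lemma frobSq_eq_trace (M : Matrix n m ℝ) : frobSq M = (Mᵀ * M).trace := by
  rw [← frobSq_transpose]
  simp only [frobSq, trace, diag_apply, mul_apply, transpose_apply, sq]

lemma frobSq_sub (M N : Matrix n m ℝ) :
    frobSq (M - N) = frobSq M - 2 * (Mᵀ * N).trace + frobSq N := by
  have hcross : (Nᵀ * M).trace = (Mᵀ * N).trace := by
    rw [← trace_transpose, transpose_mul, transpose_transpose]
  simp only [frobSq_eq_trace, transpose_sub, Matrix.sub_mul, Matrix.mul_sub, trace_sub, hcross]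
  ring

lemma frobSq_diagonal_mul [DecidableEq n] (r : n → ℝ) (M : Matrix n m ℝ) :
    frobSq (diagonal r * M) = ∑ i, r i ^ 2 * ∑ j, M i j ^ 2 := by
  simp only [frobSq, diagonal_mul, mul_pow, mul_sum]

lemma frobSq_diagonal [DecidableEq n] (r : n → ℝ) : frobSq (diagonal r) = ∑ i, r i ^ 2 := by
  simp only [frobSq_eq_trace, diagonal_transpose, diagonal_mul_diagonal, trace_diagonal, sq]

variable [DecidableEq k] {U : Matrix n k ℝ}

lemma frobSq_mul_of_transpose_mul_self_eq_one (hU : Uᵀ * U = 1) (M : Matrix k m ℝ) :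
    frobSq (U * M) = frobSq M := by
  rw [frobSq_eq_trace, frobSq_eq_trace, transpose_mul, Matrix.mul_assoc, ← Matrix.mul_assoc Uᵀ, hU,
    Matrix.one_mul]

/- The difference of the two sides is `frobSq (M - U * Uᵀ * M)`. -/
lemma frobSq_transpose_mul_le (hU : Uᵀ * U = 1) (M : Matrix n m ℝ) :
    frobSq (Uᵀ * M) ≤ frobSq M := by
  have hcross : (Mᵀ * (U * (Uᵀ * M))).trace = frobSq (Uᵀ * M) := by
    rw [frobSq_eq_trace, transpose_mul, transpose_transpose, Matrix.mul_assoc]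
  have h := frobSq_nonneg (M - U * (Uᵀ * M))
  rw [frobSq_sub, hcross, frobSq_mul_of_transpose_mul_self_eq_one hU] at h
  linarith

end Frobenius

lemma exists_eq_mul_of_range_le {n m k : Type*} [Fintype m] [Fintype k]
    {A : Matrix n m ℝ} {B : Matrix n k ℝ}
    (h : LinearMap.range A.mulVecLin ≤ LinearMap.range B.mulVecLin) :
    ∃ Z : Matrix k m ℝ, A = B * Z := by
  classical
  have hcol : ∀ j, ∃ z, B *ᵥ z = A.col j := fun j => h ⟨Pi.single j 1, mulVec_single_one A j⟩
  choose z hz using hcol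
  exact ⟨(Matrix.of z)ᵀ, ext fun i j => (congrFun (hz j) i).symm⟩

namespace IsProjOnto

variable {n m : Type*} [Fintype n] [Fintype m] {P : Matrix n n ℝ} {B : Matrix n m ℝ}

lemma exists_eq_mul (h : IsProjOnto P B) : ∃ Z : Matrix m n ℝ, P = B * Z :=
  exists_eq_mul_of_range_le h.2.2.le

lemma mul_eq (h : IsProjOnto P B) : P * B = B := by
  obtain ⟨Z, rfl⟩ := exists_eq_mul_of_range_le h.2.2.ge
  rw [← Matrix.mul_assoc, h.2.1]

lemma frobSq_le_card (h : IsProjOnto P B) : frobSq P ≤ Fintype.card m := by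
  classical
  obtain ⟨hsymm, hidem, hrange⟩ := h
  have hidem' : IsIdempotentElem P.toLin' := by
    rw [IsIdempotentElem, Module.End.mul_eq_comp, ← toLin'_mul, hidem]
  have htrace : P.trace = P.rank := by
    rw [← trace_toLin'_eq]
    exact (LinearMap.isProj_range_iff_isIdempotentElem _ |>.2 hidem').trace
  have hrank : P.rank = B.rank := by rw [Matrix.rank, hrange, Matrix.rank]
  rw [frobSq_eq_trace, hsymm.eq, hidem, htrace, hrank]
  exact_mod_cast B.rank_le_card_width

lemma sum_sq_mulVec_eq [DecidableEq n] (h : IsProjOnto P B) (a : n → ℝ) :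
    ∑ x, (P *ᵥ a) x ^ 2 = ∑ x, a x ^ 2 - ∑ x, ((1 - P) *ᵥ a) x ^ 2 := by
  have hsq : ∀ b : n → ℝ, ∑ x, b x ^ 2 = b ⬝ᵥ b := fun b => by simp only [dotProduct, sq]
  have hPP : P *ᵥ a ⬝ᵥ P *ᵥ a = a ⬝ᵥ P *ᵥ a := by
    rw [dotProduct_mulVec, vecMul_mulVec, h.1.eq, h.2.1, ← dotProduct_mulVec]
  rw [hsq, hsq, hsq, sub_mulVec, one_mulVec, sub_dotProduct, dotProduct_sub, dotProduct_sub, hPP,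
    dotProduct_comm (P *ᵥ a)]
  ring

end IsProjOnto

/-- The low-rank factorization loss `‖A - F Fᵀ‖_F² - ‖A‖_F²` of a symmetric matrix `A`. With
`A = A_n` and `F = F_n` it is the spectral contrastive loss; the constant `‖A‖_F²` is left out so
that it depends on `A` only through the quadratic form `Fᵀ A F`. -/
noncomputable def factorLoss {n l : Type*} [Fintype n] [Fintype l]
    (A : Matrix n n ℝ) (F : Matrix n l ℝ) : ℝ :=
  -2 * (Fᵀ * A * F).trace + frobSq (F * Fᵀ)

section FactorLoss

variable {n k l : Type*} [Fintype n] [Fintype k] [Fintype l]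

lemma neg_frobSq_mul_le_factorLoss {Q : Matrix n n ℝ} {F : Matrix n l ℝ} (hQF : Q * F = F)
    (A : Matrix n n ℝ) : -frobSq (A * Q) ≤ factorLoss A F := by
  have hcross : ((A * Q)ᵀ * (F * Fᵀ)).trace = (Fᵀ * A * F).trace := by
    calc ((A * Q)ᵀ * (F * Fᵀ)).trace = (F * Fᵀ * (A * Q)).trace := by
          rw [← trace_transpose]
          simp only [transpose_mul, transpose_transpose]
      _ = (Fᵀ * (A * Q) * F).trace := by rw [Matrix.mul_assoc, trace_mul_comm]
      _ = (Fᵀ * A * F).trace := by rw [← Matrix.mul_assoc, Matrix.mul_assoc (Fᵀ * A), hQF]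
  have h := frobSq_nonneg (A * Q - F * Fᵀ)
  rw [frobSq_sub, hcross] at h
  rw [factorLoss]
  linarith

lemma bddBelow_range_factorLoss {p : Type*} [Fintype p] (A : Matrix n n ℝ) (Φ : Matrix n p ℝ) :
    BddBelow (Set.range fun W : Matrix p l ℝ => factorLoss A (Φ * W)) := by
  classical
  refine ⟨-frobSq (A * 1), ?_⟩
  rintro _ ⟨W, rfl⟩
  exact neg_frobSq_mul_le_factorLoss (Matrix.one_mul _) A

lemma factorLoss_compress {P : Matrix n n ℝ} {F : Matrix n l ℝ} (hP : P.IsSymm) (hPF : P * F = F)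
    (A : Matrix n n ℝ) : factorLoss (P * A * P) F = factorLoss A F := by
  have hFP : Fᵀ * P = Fᵀ := by rw [← hP.eq, ← transpose_mul, hPF]
  have h : Fᵀ * (P * A * P) * F = Fᵀ * P * A * (P * F) := by simp only [Matrix.mul_assoc]
  rw [factorLoss, factorLoss, h, hFP, hPF]

variable [DecidableEq k]

lemma factorLoss_conj {U : Matrix n k ℝ} (hU : Uᵀ * U = 1) (A : Matrix k k ℝ) (G : Matrix k l ℝ) :
    factorLoss (U * A * Uᵀ) (U * G) = factorLoss A G := by
  have hform : (U * G)ᵀ * (U * A * Uᵀ) * (U * G) = Gᵀ * (Uᵀ * U) * A * (Uᵀ * U) * G := by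
    simp only [transpose_mul, Matrix.mul_assoc]
  have hgram : U * G * (U * G)ᵀ = U * (U * (G * Gᵀ))ᵀ := by
    simp only [transpose_mul, transpose_transpose, Matrix.mul_assoc]
  rw [factorLoss, factorLoss, hform, hgram, hU, Matrix.mul_one, Matrix.mul_one,
    frobSq_mul_of_transpose_mul_self_eq_one hU, frobSq_transpose,
    frobSq_mul_of_transpose_mul_self_eq_one hU]

lemma factorLoss_diagonal {γ : k → ℝ} {T : Finset k} {G : Matrix k l ℝ}
    (hG : G * Gᵀ = diagonal fun i => if i ∈ T then γ i else 0) :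
    factorLoss (diagonal γ) G = -∑ i ∈ T, γ i ^ 2 := by
  rw [factorLoss, trace_mul_comm, ← Matrix.mul_assoc, hG, diagonal_mul_diagonal, trace_diagonal,
    frobSq_diagonal]
  simp only [ite_mul, zero_mul, ite_pow, zero_pow two_ne_zero, sum_ite_mem, univ_inter, ← sq]
  ring

end FactorLoss

lemma exists_mul_transpose_eq_diagonal {k l : Type*} [Fintype l] [DecidableEq k] {T : Finset k}
    (hT : #T ≤ Fintype.card l) :
    ∃ E : Matrix k l ℝ, E * Eᵀ = diagonal fun i => if i ∈ T then 1 else 0 := by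
  classical
  obtain ⟨e⟩ : Nonempty (T ↪ l) := Function.Embedding.nonempty_of_card_le (by simpa using hT)
  refine ⟨Matrix.of fun i j => if h : i ∈ T then if e ⟨i, h⟩ = j then 1 else 0 else 0, ?_⟩
  ext i i'
  obtain rfl | hne := eq_or_ne i i'
  · by_cases hi : i ∈ T <;> simp [mul_apply, hi]
  · by_cases hi : i ∈ T <;> by_cases hi' : i' ∈ T <;> simp [mul_apply, hi, hi', hne]

/- Weights in `[0, 1]` of total mass at most `#T` maximize `∑ i, c i * γ i ^ 2` when concentrated on
`T`; the mass missing from `S` ends up at values of `γ` at most `b` instead of at least `a`. -/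
lemma sq_gap_mul_sum_one_sub_le {k : Type*} [Fintype k] {S T : Finset k}
    {γ c : k → ℝ} {a b : ℝ} (hST : S ⊆ T) (hb : 0 ≤ b) (hba : b ≤ a) (hS : ∀ i ∈ S, a ≤ γ i)
    (hT : ∀ i ∈ T, b ≤ γ i) (hγ : ∀ i, 0 ≤ γ i) (hTc : ∀ i ∉ T, γ i ≤ b) (hc0 : ∀ i, 0 ≤ c i)
    (hc1 : ∀ i, c i ≤ 1) (hcT : ∑ i, c i ≤ #T) :
    (a - b) ^ 2 * ∑ i ∈ S, (1 - c i) ≤ ∑ i ∈ T, γ i ^ 2 - ∑ i, γ i ^ 2 * c i := by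
  classical
  have hmass : ∑ i ∈ Tᶜ, c i ≤ ∑ i ∈ T, (1 - c i) := by
    rw [← sum_add_sum_compl T c] at hcT
    rw [sum_sub_distrib, sum_const, nsmul_one]
    linarith
  have hgap : ∀ i ∈ S, (a - b) ^ 2 ≤ γ i ^ 2 - b ^ 2 := fun i hi => by
    nlinarith [hS i hi, pow_le_pow_left₀ (hb.trans hba) (hS i hi) 2]
  calc (a - b) ^ 2 * ∑ i ∈ S, (1 - c i) = ∑ i ∈ S, (a - b) ^ 2 * (1 - c i) := mul_sum ..
    _ ≤ ∑ i ∈ S, (γ i ^ 2 - b ^ 2) * (1 - c i) := sum_le_sum fun i hi =>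
        mul_le_mul_of_nonneg_right (hgap i hi) (sub_nonneg.2 (hc1 i))
    _ ≤ ∑ i ∈ T, (γ i ^ 2 - b ^ 2) * (1 - c i) := sum_le_sum_of_subset_of_nonneg hST
        fun i hi _ => mul_nonneg (sub_nonneg.2 (pow_le_pow_left₀ hb (hT i hi) 2))
          (sub_nonneg.2 (hc1 i))
    _ = ∑ i ∈ T, γ i ^ 2 - ∑ i ∈ T, γ i ^ 2 * c i - b ^ 2 * ∑ i ∈ T, (1 - c i) := by
        rw [mul_sum, ← sum_sub_distrib, ← sum_sub_distrib]
        exact sum_congr rfl fun i _ => by ring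
    _ ≤ ∑ i ∈ T, γ i ^ 2 - ∑ i ∈ T, γ i ^ 2 * c i - b ^ 2 * ∑ i ∈ Tᶜ, c i := by gcongr
    _ ≤ ∑ i ∈ T, γ i ^ 2 - ∑ i ∈ T, γ i ^ 2 * c i - ∑ i ∈ Tᶜ, γ i ^ 2 * c i := by
        rw [mul_sum]
        gcongr with i hi
        exacts [hc0 i, hγ i, hTc i (mem_compl.1 hi)]
    _ = ∑ i ∈ T, γ i ^ 2 - ∑ i, γ i ^ 2 * c i := by rw [sub_sub, sum_add_sum_compl]

section SpectralGap

variable {n k l p : Type*} [Fintype n] [Fintype k] [Fintype l] [Fintype p] [DecidableEq k]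
  {A P Q : Matrix n n ℝ} {Φ : Matrix n p ℝ} {F : Matrix n l ℝ} {U : Matrix n k ℝ} {γ : k → ℝ}

omit [Fintype k] [DecidableEq k] in
lemma transpose_mul_apply_of_isSymm (hQ : Q.IsSymm) (U : Matrix n k ℝ) (i : k) (x : n) :
    (Uᵀ * Q) i x = (Q *ᵥ U.col i) x := by
  rw [← hQ.eq, mulVec_transpose, hQ.eq]
  rfl

lemma IsProjOnto.sum_sum_sq_mulVec_col_le_card (hQ : IsProjOnto Q F) (hU : Uᵀ * U = 1) :
    ∑ i, ∑ x, (Q *ᵥ U.col i) x ^ 2 ≤ Fintype.card l := by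
  have h : frobSq (Uᵀ * Q) = ∑ i, ∑ x, (Q *ᵥ U.col i) x ^ 2 := by
    simp only [frobSq, transpose_mul_apply_of_isSymm hQ.1]
  exact h ▸ (frobSq_transpose_mul_le hU Q).trans hQ.frobSq_le_card

lemma IsProjOnto.neg_sum_le_factorLoss (hQ : IsProjOnto Q F) (hU : Uᵀ * U = 1) (γ : k → ℝ) :
    -∑ i, γ i ^ 2 * ∑ x, (Q *ᵥ U.col i) x ^ 2 ≤ factorLoss (U * diagonal γ * Uᵀ) F := by
  have h := neg_frobSq_mul_le_factorLoss hQ.mul_eq (U * diagonal γ * Uᵀ)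
  rw [Matrix.mul_assoc, Matrix.mul_assoc, frobSq_mul_of_transpose_mul_self_eq_one hU,
    frobSq_diagonal_mul] at h
  simpa only [transpose_mul_apply_of_isSymm hQ.1] using h

/- The bound is attained at `U √Γ E`, where `E` selects the coordinates in `T`; its columns lie in
the range of `P A P = U Γ Uᵀ`, hence in that of `Φ`. -/
lemma IsProjOnto.iInf_factorLoss_le (hP : IsProjOnto P Φ) (hU : Uᵀ * U = 1) (hγ : ∀ i, 0 ≤ γ i)
    (hPAP : P * A * P = U * diagonal γ * Uᵀ) {T : Finset k} (hT : #T ≤ Fintype.card l) :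
    ⨅ W : Matrix p l ℝ, factorLoss A (Φ * W) ≤ -∑ i ∈ T, γ i ^ 2 := by
  obtain ⟨Z, hZ⟩ := hP.exists_eq_mul
  obtain ⟨E, hE⟩ := exists_mul_transpose_eq_diagonal hT
  set G : Matrix k l ℝ := diagonal (fun i => √(γ i)) * E with hG
  have hGG : G * Gᵀ = diagonal fun i => if i ∈ T then γ i else 0 := by
    have h : G * Gᵀ = diagonal (fun i => √(γ i)) * (E * Eᵀ) * diagonal (fun i => √(γ i)) := by
      simp only [hG, transpose_mul, diagonal_transpose, Matrix.mul_assoc]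
    rw [h, hE, diagonal_mul_diagonal, diagonal_mul_diagonal]
    simp only [mul_ite, ite_mul, mul_one, mul_zero, zero_mul, Real.mul_self_sqrt (hγ _)]
  have hroot : diagonal γ * diagonal (fun i => (√(γ i))⁻¹) = diagonal fun i => √(γ i) := by
    simp only [diagonal_mul_diagonal, ← div_eq_mul_inv, Real.div_sqrt]
  have hrange : U * G = Φ * (Z * A * P * U * diagonal (fun i => (√(γ i))⁻¹) * E) := by
    calc U * G = U * diagonal γ * (Uᵀ * U) * diagonal (fun i => (√(γ i))⁻¹) * E := by
          rw [hU, Matrix.mul_one, Matrix.mul_assoc U, hroot, Matrix.mul_assoc]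
      _ = P * A * P * U * diagonal (fun i => (√(γ i))⁻¹) * E := by
          rw [hPAP, Matrix.mul_assoc _ Uᵀ]
      _ = _ := by
          nth_rewrite 1 [hZ]
          simp only [Matrix.mul_assoc]
  have hPUG : P * (U * G) = U * G := by rw [hrange, ← Matrix.mul_assoc, hP.mul_eq]
  calc ⨅ W : Matrix p l ℝ, factorLoss A (Φ * W) ≤ factorLoss A (U * G) :=
        hrange ▸ ciInf_le (bddBelow_range_factorLoss A Φ) _
    _ = factorLoss (diagonal γ) G := by
        rw [← factorLoss_compress hP.1 hPUG, hPAP, factorLoss_conj hU]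
    _ = -∑ i ∈ T, γ i ^ 2 := factorLoss_diagonal hGG

theorem IsProjOnto.sq_gap_mul_sum_le_factorLoss_sub_iInf [DecidableEq n] (hP : IsProjOnto P Φ)
    {W : Matrix p l ℝ} (hQ : IsProjOnto Q (Φ * W)) (hU : Uᵀ * U = 1) (hγ : ∀ i, 0 ≤ γ i)
    (hPAP : P * A * P = U * diagonal γ * Uᵀ) {S T : Finset k} {a b : ℝ} (hST : S ⊆ T)
    (hcard : #T = min (Fintype.card k) (Fintype.card l)) (hb : 0 ≤ b) (hba : b ≤ a)
    (hS : ∀ i ∈ S, a ≤ γ i) (hT : ∀ i ∈ T, b ≤ γ i) (hTc : ∀ i ∉ T, γ i ≤ b) :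
    (a - b) ^ 2 * ∑ i ∈ S, ∑ x, ((1 - Q) *ᵥ U.col i) x ^ 2 ≤
      factorLoss A (Φ * W) - ⨅ W' : Matrix p l ℝ, factorLoss A (Φ * W') := by
  set c : k → ℝ := fun i => ∑ x, (Q *ᵥ U.col i) x ^ 2
  have hunit : ∀ i, ∑ x, U.col i x ^ 2 = 1 := fun i => by
    simpa [mul_apply, ← sq] using congrFun₂ hU i i
  have hres : ∀ i, ∑ x, ((1 - Q) *ᵥ U.col i) x ^ 2 = 1 - c i := fun i => by
    linarith [hQ.sum_sq_mulVec_eq (U.col i), hunit i]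
  have hc0 : ∀ i, 0 ≤ c i := fun i => sum_nonneg fun _ _ => sq_nonneg _
  have hc1 : ∀ i, c i ≤ 1 := fun i =>
    sub_nonneg.1 (hres i ▸ sum_nonneg fun _ _ => sq_nonneg _)
  have hcT : ∑ i, c i ≤ #T := by
    rw [hcard, Nat.cast_min]
    refine le_min ?_ (hQ.sum_sum_sq_mulVec_col_le_card hU)
    simpa using sum_le_card_nsmul univ c 1 fun i _ => hc1 i
  have hlower : -∑ i, γ i ^ 2 * c i ≤ factorLoss A (Φ * W) := by
    have hPF : P * (Φ * W) = Φ * W := by rw [← Matrix.mul_assoc, hP.mul_eq]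
    rw [← factorLoss_compress hP.1 hPF, hPAP]
    exact hQ.neg_sum_le_factorLoss hU γ
  have hupper := hP.iInf_factorLoss_le (l := l) hU hγ hPAP (hcard.trans_le (min_le_right _ _))
  simp only [hres]
  linarith [sq_gap_mul_sum_one_sub_le hST hb hba hS hT hγ hTc hc0 hc1 hcT]

end SpectralGap

section SpectralContrastiveLoss

variable {wb : Xb → ℝ} {wc : Xb → X → ℝ}

lemma transpose_AbarN_mul_AbarN (hwb : ∀ xb, 0 ≤ wb xb) :
    (AbarN wb wc)ᵀ * AbarN wb wc = AN wb wc := by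
  have hgram : (Abar wb wc)ᵀ * diagonal (fun xb => (√(wb xb))⁻¹ * (√(wb xb))⁻¹) * Abar wb wc =
      Amat wb wc := by
    ext x x'
    rw [mul_apply]
    simp only [mul_diagonal, transpose_apply, Abar, Amat, of_apply]
    refine sum_congr rfl fun xb _ => ?_
    have hroot : (√(wb xb))⁻¹ * (√(wb xb))⁻¹ * (wb xb * wb xb) = wb xb := by
      rw [← mul_inv, Real.mul_self_sqrt (hwb xb), ← mul_assoc, inv_mul_mul_self]
    linear_combination wc xb x * wc xb x' * hroot
  rw [AN, ← hgram, ← diagonal_mul_diagonal]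
  simp only [AbarN, transpose_mul, diagonal_transpose, Matrix.mul_assoc]

lemma trace_transpose_mul_mul_eq_sum {n l : Type*} [Fintype n] [Fintype l] (A : Matrix n n ℝ)
    (F : Matrix n l ℝ) : (Fᵀ * A * F).trace = ∑ x, ∑ x', A x x' * (F * Fᵀ) x x' := by
  rw [Matrix.mul_assoc, trace_mul_comm, Matrix.mul_assoc]
  simp only [trace, diag_apply, Matrix.mul_apply (M := A)]
  refine sum_congr rfl fun x _ => sum_congr rfl fun x' _ => ?_
  rw [← transpose_apply (F * Fᵀ), transpose_mul, transpose_transpose]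

lemma Nmat_mul_transpose_apply {n l : Type*} [Fintype l] (w : n → ℝ) (f : n → l → ℝ) (x x' : n) :
    (Nmat w f * (Nmat w f)ᵀ) x x' = √(w x) * √(w x') * ∑ i, f x i * f x' i := by
  simp only [Nmat, mul_apply, transpose_apply, of_apply, mul_sum]
  exact sum_congr rfl fun i _ => by ring

lemma Nmat_linear_eq_mul {n p l : Type*} [Fintype p] (w : n → ℝ) (φ : n → p → ℝ)
    (W : Matrix p l ℝ) : Nmat w (fun x i => ∑ j, W j i * φ x j) = Nmat w φ * W := by
  ext x i
  simp only [Nmat, mul_apply, of_apply, mul_sum]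
  exact sum_congr rfl fun j _ => by ring

omit [DecidableEq Xb] in
lemma Lspec_eq_factorLoss (hwx : ∀ x, 0 < wX wb wc x) {d : ℕ} (f : X → Fin d → ℝ) :
    Lspec wb wc f = factorLoss (AN wb wc) (Nmat (wX wb wc) f) := by
  have hcancel : ∀ x, (√(wX wb wc x))⁻¹ * √(wX wb wc x) = 1 := fun x =>
    inv_mul_cancel₀ (Real.sqrt_pos.2 (hwx x)).ne'
  have hcross : ∀ x x', AN wb wc x x' * (√(wX wb wc x) * √(wX wb wc x') * ∑ i, f x i * f x' i) =
      (∑ xb, wb xb * wc xb x * wc xb x') * ∑ i, f x i * f x' i := fun x x' => by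
    simp only [AN, Amat, mul_diagonal, diagonal_mul, of_apply]
    set t := (∑ xb, wb xb * wc xb x * wc xb x') * ∑ i, f x i * f x' i
    linear_combination t * (√(wX wb wc x'))⁻¹ * √(wX wb wc x') * hcancel x + t * hcancel x'
  rw [Lspec, factorLoss, trace_transpose_mul_mul_eq_sum]
  simp only [frobSq, Nmat_mul_transpose_apply, hcross, mul_pow, Real.sq_sqrt (hwx _).le]

end SpectralContrastiveLoss

section ColumnMatrix

variable {κ n m : Type*} {s : Finset κ}

/-- The matrix whose columns are the vectors `u i` with `i ∈ s`. It turns the singular vectors,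
which the theorem indexes by natural numbers, into matrices with finitely many columns. -/
def columnMatrix (s : Finset κ) (u : κ → n → ℝ) : Matrix n s ℝ :=
  Matrix.of fun x i => u i x

lemma columnMatrix_transpose_mul_self [Fintype n] [DecidableEq κ] {u : κ → n → ℝ}
    (hu : ∀ i ∈ s, ∀ j ∈ s, ∑ x, u i x * u j x = if i = j then (1 : ℝ) else 0) :
    (columnMatrix s u)ᵀ * columnMatrix s u = 1 := by
  ext i j
  simp only [mul_apply, transpose_apply, columnMatrix, of_apply, one_apply, Subtype.ext_iff,
    hu i i.2 j j.2]

lemma columnMatrix_mul_diagonal_mul_transpose_apply [DecidableEq κ] (u : κ → n → ℝ) (σ : κ → ℝ)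
    (v : κ → m → ℝ) (x : n) (y : m) :
    (columnMatrix s u * diagonal (fun i : s => σ i) * (columnMatrix s v)ᵀ) x y =
      ∑ i ∈ s, σ i * u i x * v i y := by
  rw [mul_apply, ← sum_coe_sort s fun i => σ i * u i x * v i y]
  simp only [mul_diagonal, transpose_apply, columnMatrix, of_apply, mul_comm (σ _)]

end ColumnMatrix

lemma mul_transpose_of_svd {n m k : Type*} [Fintype m] [Fintype k] [DecidableEq k]
    {M : Matrix n m ℝ} {U : Matrix n k ℝ} {V : Matrix m k ℝ} {σ : k → ℝ}
    (hM : M = U * diagonal σ * Vᵀ) (hV : Vᵀ * V = 1) :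
    M * Mᵀ = U * diagonal (fun i => σ i ^ 2) * Uᵀ := by
  calc M * Mᵀ = U * diagonal σ * (Vᵀ * V) * diagonal σ * Uᵀ := by
        simp only [hM, transpose_mul, transpose_transpose, diagonal_transpose, Matrix.mul_assoc]
    _ = U * diagonal (fun i => σ i ^ 2) * Uᵀ := by
        simp only [hV, Matrix.mul_one, Matrix.mul_assoc U, diagonal_mul_diagonal, sq]

lemma mul_AN_mul_of_svd {wb : Xb → ℝ} {wc : Xb → X → ℝ} (hwb : ∀ xb, 0 ≤ wb xb) {k : Type*}
    [Fintype k] [DecidableEq k] {P : Matrix X X ℝ} {U : Matrix X k ℝ} {V : Matrix Xb k ℝ}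
    {σ : k → ℝ} (hP : P.IsSymm) (hV : Vᵀ * V = 1)
    (hsvd : P * (AbarN wb wc)ᵀ = U * diagonal σ * Vᵀ) :
    P * AN wb wc * P = U * diagonal (fun i => σ i ^ 2) * Uᵀ := by
  rw [← mul_transpose_of_svd hsvd hV, ← transpose_AbarN_mul_AbarN hwb]
  simp only [transpose_mul, transpose_transpose, hP.eq, Matrix.mul_assoc]

theorem eps_optimal_captures_top_directions_general {ι : Type*} [Fintype ι] {d : ℕ}
    (wb : Xb → ℝ) (wc : Xb → X → ℝ) (hwb : ∀ xb, 0 < wb xb) (hwx : ∀ x, 0 < wX wb wc x)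
    (φ : X → ι → ℝ) (P : Matrix X X ℝ) (hP : IsProjOnto P (Nmat (wX wb wc) φ))
    (W : Matrix ι (Fin d) ℝ) (f : X → Fin d → ℝ) (hf : ∀ x i, f x i = ∑ j, W j i * φ x j)
    (PF : Matrix X X ℝ) (hPF : IsProjOnto PF (Nmat (wX wb wc) f))
    (m : ℕ) (γ : ℕ → ℝ) (u : ℕ → X → ℝ) (v : ℕ → Xb → ℝ) (hγnonneg : ∀ i, 0 ≤ γ i)
    (hγmono : ∀ i j, 1 ≤ i → i ≤ j → γ j ≤ γ i) (hγpad : ∀ i, m < i → γ i = 0)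
    (hu : ∀ i ∈ Icc 1 m, ∀ j ∈ Icc 1 m, ∑ x, u i x * u j x = if i = j then (1 : ℝ) else 0)
    (hv : ∀ i ∈ Icc 1 m, ∀ j ∈ Icc 1 m, ∑ xb, v i xb * v j xb = if i = j then (1 : ℝ) else 0)
    (hsvd : ∀ x xb, (P * (AbarN wb wc)ᵀ) x xb = ∑ i ∈ Icc 1 m, √(γ i) * u i x * v i xb)
    (d' : ℕ) (hd'd : d' ≤ d) (hgap : γ (d + 1) < γ d') :
    ∑ i ∈ Icc 1 d', ∑ x, ((1 - PF) *ᵥ u i) x ^ 2 ≤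
      (Lspec wb wc f - ⨅ W' : Matrix ι (Fin d) ℝ, Lspec wb wc fun x i => ∑ j, W' j i * φ x j) /
        (γ d' - γ (d + 1)) ^ 2 := by
  obtain rfl : f = fun x i => ∑ j, W j i * φ x j := funext₂ hf
  simp only [Lspec_eq_factorLoss hwx, Nmat_linear_eq_mul] at hPF ⊢
  have hd'm : d' ≤ m := by
    by_contra! h
    exact absurd hgap (by simpa [hγpad d' h] using hγnonneg (d + 1))
  have hPA : P * (AbarN wb wc)ᵀ = columnMatrix (Icc 1 m) u *
      diagonal (fun i : Icc 1 m => √(γ i)) * (columnMatrix (Icc 1 m) v)ᵀ := by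
    ext x xb
    rw [hsvd, columnMatrix_mul_diagonal_mul_transpose_apply u (fun i => √(γ i)) v]
  have hPAP := mul_AN_mul_of_svd (fun xb => (hwb xb).le) hP.1
    (columnMatrix_transpose_mul_self hv) hPA
  simp only [Real.sq_sqrt (hγnonneg _)] at hPAP
  have hcard : #((Icc 1 d).subtype (· ∈ Icc 1 m)) =
      min (Fintype.card (Icc 1 m)) (Fintype.card (Fin d)) := by
    have hinter : Icc 1 d ∩ Icc 1 m = Icc 1 (min m d) := by
      ext i
      simp only [mem_inter, mem_Icc]
      lia
    rw [card_subtype, filter_mem_eq_inter, hinter]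
    simp
  rw [le_div_iff₀' (pow_pos (sub_pos.2 hgap) 2),
    ← sum_subtype_of_mem (p := (· ∈ Icc 1 m)) _ (Icc_subset_Icc_right hd'm)]
  refine hP.sq_gap_mul_sum_le_factorLoss_sub_iInf hPF (columnMatrix_transpose_mul_self hu)
    (fun i => hγnonneg i) hPAP (subtype_mono (Icc_subset_Icc_right hd'd)) hcard
    (hγnonneg (d + 1)) hgap.le (fun i hi => ?_) (fun i hi => ?_) (fun i hi => ?_) <;>
    simp only [mem_subtype, mem_Icc] at hi
  · exact hγmono i d' hi.1 hi.2
  · exact hγmono i (d + 1) hi.1 (by lia)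
  · exact hγmono (d + 1) i (by lia) (by have := mem_Icc.1 i.2; lia)

/-- an ε-optimal representation in the linear class captures the top
singular directions of `P_{Φ_n} Ā_nᵀ`:
`‖P⊥_{F_n} U_{:d′}‖_F² ≤ ε·d′ / (γ_{d′} − γ_{d+1})²`. -/
theorem eps_optimal_captures_top_directions {D d : ℕ} [Nonempty Xb] [Nonempty X]
    (wb : Xb → ℝ) (wc : Xb → X → ℝ)
    (hwb : ∀ xb, 0 < wb xb) (hwbsum : ∑ xb, wb xb = 1)
    (hwc : ∀ xb x, 0 ≤ wc xb x) (hwcsum : ∀ xb, ∑ x, wc xb x = 1)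
    (hwx : ∀ x, 0 < wX wb wc x)
    (φ : X → Fin D → ℝ)
    (P : Matrix X X ℝ) (hP : IsProjOnto P (Nmat (wX wb wc) φ))
    (W : Matrix (Fin D) (Fin d) ℝ) (f : X → Fin d → ℝ)
    (hf : ∀ x i, f x i = ∑ j, W j i * φ x j)
    (PF : Matrix X X ℝ) (hPF : IsProjOnto PF (Nmat (wX wb wc) f))
    (γ : ℕ → ℝ) (u : ℕ → X → ℝ) (v : ℕ → Xb → ℝ)
    (hγnonneg : ∀ i, 0 ≤ γ i)
    (hγmono : ∀ i j, 1 ≤ i → i ≤ j → γ j ≤ γ i)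
    (hγpad : ∀ i, min (Fintype.card X) (Fintype.card Xb) < i → γ i = 0)
    (hu : ∀ i ∈ Finset.Icc 1 (min (Fintype.card X) (Fintype.card Xb)),
        ∀ j ∈ Finset.Icc 1 (min (Fintype.card X) (Fintype.card Xb)),
        ∑ x, u i x * u j x = if i = j then (1 : ℝ) else 0)
    (hv : ∀ i ∈ Finset.Icc 1 (Fintype.card Xb), ∀ j ∈ Finset.Icc 1 (Fintype.card Xb),
        ∑ xb, v i xb * v j xb = if i = j then (1 : ℝ) else 0)
    (hsvd : ∀ x xb, (P * (AbarN wb wc)ᵀ) x xb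
        = ∑ i ∈ Finset.Icc 1 (min (Fintype.card X) (Fintype.card Xb)),
            Real.sqrt (γ i) * u i x * v i xb)
    (d' : ℕ) (hd'1 : 1 ≤ d') (hd'd : d' ≤ d) (hgap : γ (d + 1) < γ d') :
    ∑ i ∈ Finset.Icc 1 d', ∑ x, ((1 - PF).mulVec (u i)) x ^ 2
      ≤ (Lspec wb wc f
            - ⨅ W' : Matrix (Fin D) (Fin d) ℝ, Lspec wb wc fun x i => ∑ j, W' j i * φ x j)
          * d' / (γ d' - γ (d + 1)) ^ 2 := by
  have hIcc := Icc_subset_Icc_right (a := 1) (min_le_right (Fintype.card X) (Fintype.card Xb))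
  have h := eps_optimal_captures_top_directions_general wb wc hwb hwx φ P hP W f hf PF hPF _ γ u v
    hγnonneg hγmono hγpad hu (fun i hi j hj => hv i (hIcc hi) j (hIcc hj)) hsvd d' hd'd hgap
  exact (h.trans (le_mul_of_one_le_right (le_trans (by positivity) h) (mod_cast hd'1))).trans_eq
    (mul_div_right_comm ..).symm
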